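/- Let R be a Noetherian local ring, M a finitely generated R-module, and A a faithfully flat R-algebra. Let 𝔎 be an idempotent ideal of A (i.e. 𝔎² = 𝔎) such that 𝔎 · (M ⊗_R A) = 0 and such that the preimage of 𝔎 under the structure map R → A is nonzero (equivalently, since R → A is injective by faithful flatness, R ∩ 𝔎 ≠ 0). Then M = 0. -/

import Mathlib

universe u v w

open TensorProduct

/-!
If `M ≠ 0`, finiteness gives a simple quotient of `M`, necessarily `R ⧸ 𝔪`. Hence `𝔎` kills
`A ⊗ R ⧸ 𝔪 ≃ A ⧸ 𝔪A`, that is, `𝔎 ≤ 𝔪A`. By idempotence `𝔎 = 𝔎 ^ n ≤ 𝔪 ^ n A` for all `n`, and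
faithful flatness gives `𝔎 ∩ R ≤ 𝔪 ^ n A ∩ R = 𝔪 ^ n`. Krull's intersection theorem then forces
`𝔎 ∩ R = 0`.
-/

/-- André's key lemma: let `R` be a Noetherian local ring, `M` a finitely generated
`R`-module, and `A` a faithfully flat `R`-algebra.  If `𝔎` is an idempotent ideal of `A`
killing `M ⊗_R A` and whose contraction to `R` is nonzero, then `M = 0`. -/
theorem andre_key_lemma
    (R : Type u) [CommRing R] [IsLocalRing R] [IsNoetherianRing R]
    (M : Type v) [AddCommGroup M] [Module R M] [Module.Finite R M]
    (A : Type w) [CommRing A] [Algebra R A] [Module.FaithfullyFlat R A]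
    (𝔎 : Ideal A)
    (hidem : 𝔎 * 𝔎 = 𝔎)
    (hkill : 𝔎 • (⊤ : Submodule A (A ⊗[R] M)) = ⊥)
    (hcontr : 𝔎.comap (algebraMap R A) ≠ ⊥) :
    Subsingleton M := by
  by_contra hM
  rw [not_subsingleton_iff_nontrivial] at hM
  obtain ⟨N, hN⟩ := IsCoatomic.exists_coatom (Submodule R M)
  have hsimple : IsSimpleModule R (M ⧸ N) := isSimpleModule_iff_isCoatom.mpr hN
  obtain ⟨I, hI, ⟨e⟩⟩ := isSimpleModule_iff_quot_maximal.mp hsimple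
  obtain rfl := IsLocalRing.eq_maximalIdeal hI
  set 𝔪 := IsLocalRing.maximalIdeal R
  obtain ⟨x, hx⟩ : ∃ x : M, e (N.mkQ x) = Submodule.Quotient.mk 1 :=
    (e.surjective.comp N.mkQ_surjective) _
  have hle : 𝔎 ≤ 𝔪.map (algebraMap R A) := by
    intro a ha
    have h0 : a ⊗ₜ[R] x = 0 := by
      have h := Submodule.smul_mem_smul ha
        (Submodule.mem_top (R := A) (x := (1 : A) ⊗ₜ[R] x))
      rw [hkill, Submodule.mem_bot, TensorProduct.smul_tmul', smul_eq_mul, mul_one] at h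
      exact h
    have h1 := congrArg (LinearMap.lTensor A (e.toLinearMap ∘ₗ N.mkQ)) h0
    rw [map_zero, LinearMap.lTensor_tmul, LinearMap.comp_apply, LinearEquiv.coe_coe, hx] at h1
    have h2 := congrArg (TensorProduct.tensorQuotEquivQuotSMul A 𝔪) h1
    erw [TensorProduct.tensorQuotEquivQuotSMul_tmul_mk] at h2
    rw [map_zero, one_smul, Submodule.Quotient.mk_eq_zero, Ideal.smul_top_eq_map] at h2
    exact h2
  have hpow (n : ℕ) : 𝔎 ≤ 𝔎 ^ n := by
    induction n with
    | zero => simp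
    | succ n ih =>
      calc 𝔎 = 𝔎 * 𝔎 := hidem.symm
        _ ≤ 𝔎 ^ n * 𝔎 := Ideal.mul_mono_left ih
        _ = 𝔎 ^ (n + 1) := (pow_succ _ _).symm
  apply hcontr
  rw [eq_bot_iff, ← Ideal.iInf_pow_eq_bot_of_isLocalRing 𝔪 hI.ne_top]
  refine le_iInf fun n => ?_
  rw [← Ideal.comap_map_eq_self_of_faithfullyFlat (B := A) (𝔪 ^ n), Ideal.map_pow]
  exact Ideal.comap_mono ((hpow n).trans (Ideal.pow_right_mono hle n))
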